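/- Let l, m ∈ ℕ be positive, let ν > 0, let A ∈ ℝ^{l×l} and B ∈ ℝ^{m×m} be symmetric positive definite matrices, and let S : ℝ^m → ℝ^l be a continuous map that is not affine-linear. Then there exist vectors y_d ∈ ℝ^l and u_d ∈ ℝ^m such that the problem of minimizing (1/2)(y − y_d)ᵀ A (y − y_d) + (ν/2)(u − u_d)ᵀ B (u − u_d) over (y,u) ∈ ℝ^l × ℝ^m subject to y = S(u) possesses more than one global solution. -/

import Mathlib

open Matrix

/-!
In the inner product on `ℝˡ × ℝᵐ` given by the quadratic form of the objective, a global solution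
is a point of the graph of `S` nearest to `(y_d, u_d)`. If solutions were always unique, the graph
would be a closed Chebyshev set, hence convex by the Bunt–Motzkin theorem, and a map with convex
graph is affine.

For the Bunt–Motzkin theorem, let `C` be a Chebyshev set with metric projection `P` and let
`f y = (‖y‖² - d(y, C)²) / 2 = sup_{c ∈ C} (⟪c, y⟫ - ‖c‖² / 2)`. The projection is a continuous
selection of subgradients of `f`, hence its gradient. If `f - ⟪x, ·⟫` is bounded below, it has
almost critical points, where `P y` is almost `x`, so `x ∈ C`. Thus `C` is the set of all `x` for
which `f - ⟪x, ·⟫` is bounded below, and this set is convex.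
-/

open Filter Metric Set Topology
open scoped RealInnerProductSpace

section NearestPoint

variable {X : Type*} [PseudoMetricSpace X] {C : Set X} {x p : X}

/-- `p` is a best approximation of `x` in `C`, i.e. a value of the metric projection at `x`. -/
def IsNearestPoint (C : Set X) (x p : X) : Prop :=
  p ∈ C ∧ IsMinOn (dist x) C p

theorem IsNearestPoint.infDist_eq (hp : IsNearestPoint C x p) : infDist x C = dist x p :=
  le_antisymm (infDist_le_dist_of_mem hp.1) ((le_infDist ⟨p, hp.1⟩).2 fun _ hc => hp.2 hc)

theorem exists_isNearestPoint [ProperSpace X] (hC : IsClosed C) (hne : C.Nonempty) (x : X) :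
    ∃ p, IsNearestPoint C x p := by
  obtain ⟨p, hpC, hp⟩ := hC.exists_infDist_eq_dist hne x
  exact ⟨p, hpC, fun c hc => hp.symm.trans_le (infDist_le_dist_of_mem hc)⟩

theorem IsNearestPoint.dist_le (hp : IsNearestPoint C x p) {c : X} (hc : c ∈ C) (y : X) :
    dist p y ≤ dist y c + 2 * dist x y := by
  have hxp : dist x p ≤ dist x c := hp.2 hc
  linarith [dist_triangle_left p y x, dist_triangle x y c]

theorem isNearestPoint_of_tendsto {α : Type*} {l : Filter α} [l.NeBot] {u v : α → X}
    (hC : IsClosed C) (huv : ∀ a, IsNearestPoint C (u a) (v a)) (hu : Tendsto u l (𝓝 x))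
    (hv : Tendsto v l (𝓝 p)) : IsNearestPoint C x p :=
  ⟨hC.mem_of_tendsto hv (Eventually.of_forall fun a => (huv a).1), fun _ hc =>
    le_of_tendsto_of_tendsto' (hu.dist hv) (hu.dist tendsto_const_nhds) fun a => (huv a).2 hc⟩

/-- A Chebyshev set: every point of the space has a unique nearest point in the set. -/
def IsChebyshev (C : Set X) : Prop :=
  ∀ x, ∃! p, IsNearestPoint C x p

end NearestPoint

section ChebyshevSet

variable {X : Type*} [MetricSpace X] {C : Set X}

theorem IsChebyshev.isClosed (hC : IsChebyshev C) : IsClosed C := by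
  refine isClosed_of_closure_subset fun x hx => ?_
  obtain ⟨p, hp, -⟩ := hC x
  have hxp : x = p := by
    rw [← dist_eq_zero, ← hp.infDist_eq, infDist_zero_of_mem_closure hx]
  exact hxp ▸ hp.1

theorem IsChebyshev.continuous_of_isNearestPoint [ProperSpace X] (hC : IsChebyshev C) {P : X → X}
    (hP : ∀ x, IsNearestPoint C x (P x)) : Continuous P := by
  refine continuous_iff_continuousAt.2 fun y => ?_
  have hmem : ∀ᶠ x in 𝓝 y, P x ∈ closedBall y (dist y (P y) + 2) := by
    filter_upwards [ball_mem_nhds y one_pos] with x hx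
    rw [mem_ball] at hx
    rw [mem_closedBall]
    linarith [(hP x).dist_le (hP y).1 y]
  refine (isCompact_closedBall _ _).tendsto_nhds_of_unique_mapClusterPt hmem fun p _ hp => ?_
  obtain ⟨U, hU, hPU⟩ := mapClusterPt_iff_ultrafilter.1 hp
  exact (hC y).unique (isNearestPoint_of_tendsto hC.isClosed hP (tendsto_id.mono_left hU) hPU)
    (hP y)

end ChebyshevSet

section Derivative

variable {E : Type*} [NormedAddCommGroup E] [NormedSpace ℝ E] {f : E → ℝ}

theorem hasFDerivAt_of_continuousAt_subgradient {f' : E → E →L[ℝ] ℝ} {x : E}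
    (hf : ∀ y z, f y + f' y (z - y) ≤ f z) (hf' : ContinuousAt f' x) :
    HasFDerivAt f (f' x) x := by
  refine .of_isLittleO <| Asymptotics.isLittleO_iff.2 fun c hc => ?_
  filter_upwards [hf' (closedBall_mem_nhds (f' x) hc)] with y hy
  have hlower : 0 ≤ f y - f x - f' x (y - x) := by linarith [hf x y]
  have hupper : f y - f x - f' x (y - x) ≤ (f' y - f' x) (y - x) := by
    have h := hf y x
    rw [← neg_sub y x, map_neg] at h
    rw [_root_.sub_apply]
    linarith
  calc ‖f y - f x - f' x (y - x)‖ = f y - f x - f' x (y - x) := Real.norm_of_nonneg hlower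
    _ ≤ ‖(f' y - f' x) (y - x)‖ := hupper.trans (Real.le_norm_self _)
    _ ≤ c * ‖y - x‖ := (f' y - f' x).le_of_opNorm_le (mem_closedBall_iff_norm.1 hy) _

theorem norm_le_of_hasFDerivAt_of_eventually_le {f' : E →L[ℝ] ℝ} {x : E} {ε : ℝ}
    (hf : HasFDerivAt f f' x) (hε : 0 ≤ ε) (hmin : ∀ᶠ y in 𝓝 x, f x ≤ f y + ε * ‖y - x‖) :
    ‖f'‖ ≤ ε := by
  refine le_of_forall_pos_le_add fun δ hδ => ?_
  have hlower : ∀ᶠ v in 𝓝 (0 : E), -((ε + δ) * ‖v‖) ≤ f' v := by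
    rw [← map_add_left_nhds_zero x, eventually_map] at hmin
    filter_upwards [hmin, (hasFDerivAt_iff_isLittleO_nhds_zero.1 hf).def hδ] with v hv hfv
    rw [add_sub_cancel_left] at hv
    linarith [(abs_le.1 hfv).2]
  refine f'.opNorm_le_of_nhds_zero (by positivity) ?_
  have hneg : Tendsto Neg.neg (𝓝 (0 : E)) (𝓝 0) := by
    simpa only [neg_zero] using tendsto_neg (0 : E)
  filter_upwards [hlower, hneg.eventually hlower] with v hv hv'
  rw [map_neg, norm_neg, neg_le_neg_iff] at hv'
  exact abs_le.2 ⟨hv, hv'⟩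

theorem exists_norm_fderiv_le_of_bddBelow [ProperSpace E] (hf : Differentiable ℝ f)
    (hbdd : BddBelow (range f)) {ε : ℝ} (hε : 0 < ε) : ∃ x, ‖fderiv ℝ f x‖ ≤ ε := by
  obtain ⟨m, hm⟩ := hbdd
  have hcoercive : Tendsto (fun y => f y + ε * ‖y‖) (cocompact E) atTop :=
    tendsto_atTop_add_left_of_le _ m (fun y => hm (mem_range_self y))
      ((tendsto_norm_cocompact_atTop (E := E)).const_mul_atTop hε)
  have hcont : Continuous fun y => f y + ε * ‖y‖ :=
    hf.continuous.add (continuous_const.mul continuous_norm)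
  obtain ⟨x, hx⟩ := hcont.exists_forall_le hcoercive
  refine ⟨x, norm_le_of_hasFDerivAt_of_eventually_le (hf x).hasFDerivAt hε.le <|
    Eventually.of_forall fun y => ?_⟩
  have hnorm : ε * ‖y‖ ≤ ε * (‖x‖ + ‖y - x‖) := by
    gcongr
    exact norm_le_norm_add_norm_sub' y x
  linarith [hx y]

end Derivative

section BuntMotzkin

variable {H : Type*} [NormedAddCommGroup H] [InnerProductSpace ℝ H] {C : Set H} {x p c : H}

/-- The Asplund function `(‖y‖² - d(y, C)²) / 2` of a set `C`. It is the convex conjugate of the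
function equal to `‖·‖² / 2` on `C` and to `+∞` off `C`. -/
noncomputable def asplundFun (C : Set H) (y : H) : ℝ :=
  (‖y‖ ^ 2 - infDist y C ^ 2) / 2

theorem inner_sub_le_asplundFun (hc : c ∈ C) (y : H) :
    ⟪c, y⟫ - ‖c‖ ^ 2 / 2 ≤ asplundFun C y := by
  have hdist : infDist y C ^ 2 ≤ ‖y - c‖ ^ 2 := by
    rw [← dist_eq_norm]
    exact pow_le_pow_left₀ infDist_nonneg (infDist_le_dist_of_mem hc) 2
  rw [norm_sub_sq_real, real_inner_comm] at hdist
  unfold asplundFun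
  linarith

theorem IsNearestPoint.asplundFun_eq (hp : IsNearestPoint C x p) :
    asplundFun C x = ⟪p, x⟫ - ‖p‖ ^ 2 / 2 := by
  rw [asplundFun, hp.infDist_eq, dist_eq_norm, norm_sub_sq_real, real_inner_comm]
  ring

theorem IsNearestPoint.asplundFun_add_inner_le (hp : IsNearestPoint C x p) (y : H) :
    asplundFun C x + ⟪p, y - x⟫ ≤ asplundFun C y := by
  rw [hp.asplundFun_eq, inner_sub_right]
  linarith [inner_sub_le_asplundFun hp.1 y]

theorem IsChebyshev.hasFDerivAt_asplundFun [ProperSpace H] (hC : IsChebyshev C)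
    (hp : IsNearestPoint C x p) : HasFDerivAt (asplundFun C) (innerSL ℝ p) x := by
  choose P hP using fun y => (hC y).exists
  obtain rfl : P x = p := (hC x).unique (hP x) hp
  exact hasFDerivAt_of_continuousAt_subgradient (f' := fun y => innerSL ℝ (P y))
    (fun y z => (hP y).asplundFun_add_inner_le z)
    ((innerSL ℝ).continuous.comp (hC.continuous_of_isNearestPoint hP)).continuousAt

theorem convex_setOf_bddBelow_sub_inner (f : H → ℝ) :
    Convex ℝ {x | BddBelow (range fun y => f y - ⟪x, y⟫)} := by
  rintro x ⟨m, hm⟩ z ⟨n, hn⟩ a b ha hb hab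
  refine ⟨a * m + b * n, forall_mem_range.2 fun y => ?_⟩
  calc a * m + b * n ≤ a * (f y - ⟪x, y⟫) + b * (f y - ⟪z, y⟫) := by
        gcongr
        exacts [hm (mem_range_self y), hn (mem_range_self y)]
    _ = (a + b) * f y - ⟪a • x + b • z, y⟫ := by
        rw [inner_add_left, real_inner_smul_left, real_inner_smul_left]
        ring
    _ = f y - ⟪a • x + b • z, y⟫ := by rw [hab, one_mul]

theorem IsChebyshev.mem_of_bddBelow_asplundFun_sub_inner [ProperSpace H] (hC : IsChebyshev C)
    (hx : BddBelow (range fun y => asplundFun C y - ⟪x, y⟫)) : x ∈ C := by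
  rw [← hC.isClosed.closure_eq, mem_closure_iff_nhds_basis nhds_basis_closedBall]
  intro ε hε
  choose P hP using fun y => (hC y).exists
  have hderiv (y : H) :
      HasFDerivAt (fun y => asplundFun C y - ⟪x, y⟫) (innerSL ℝ (P y - x)) y := by
    rw [map_sub]
    exact (hC.hasFDerivAt_asplundFun (hP y)).sub (innerSL ℝ x).hasFDerivAt
  obtain ⟨y, hy⟩ :=
    exists_norm_fderiv_le_of_bddBelow (fun y => (hderiv y).differentiableAt) hx hε
  rw [(hderiv y).fderiv, innerSL_apply_norm] at hy
  exact ⟨P y, (hP y).1, mem_closedBall_iff_norm.2 hy⟩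

theorem IsChebyshev.eq_setOf_bddBelow_asplundFun_sub_inner [ProperSpace H] (hC : IsChebyshev C) :
    C = {x | BddBelow (range fun y => asplundFun C y - ⟪x, y⟫)} := by
  refine Subset.antisymm (fun c hc => ⟨-(‖c‖ ^ 2 / 2), forall_mem_range.2 fun y => ?_⟩)
    fun x hx => hC.mem_of_bddBelow_asplundFun_sub_inner hx
  linarith [inner_sub_le_asplundFun hc y]

theorem IsChebyshev.convex [ProperSpace H] (hC : IsChebyshev C) : Convex ℝ C := by
  rw [hC.eq_setOf_bddBelow_asplundFun_sub_inner]
  exact convex_setOf_bddBelow_sub_inner _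

theorem exists_isNearestPoint_ne_of_not_convex [ProperSpace H] (hC : IsClosed C)
    (hconv : ¬ Convex ℝ C) :
    ∃ x p q, p ≠ q ∧ IsNearestPoint C x p ∧ IsNearestPoint C x q := by
  by_contra! hunique
  have hne : C.Nonempty := nonempty_iff_ne_empty.2 fun h => hconv (h ▸ convex_empty)
  refine hconv (IsChebyshev.convex fun x => ?_)
  obtain ⟨p, hp⟩ := exists_isNearestPoint hC hne x
  exact ⟨p, hp, fun q hq => by_contra fun hqp => hunique x q p hqp hq hp⟩

end BuntMotzkin

section QuadraticForm

variable {E : Type*} [AddCommGroup E] [Module ℝ E] [FiniteDimensional ℝ E] {Q : QuadraticForm ℝ E}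

theorem exists_linearEquiv_euclideanSpace_norm_sq_eq (hQ : Q.PosDef) :
    ∃ T : E ≃ₗ[ℝ] EuclideanSpace ℝ (Fin (Module.finrank ℝ E)), ∀ z, ‖T z‖ ^ 2 = Q z := by
  obtain ⟨w, hw, ⟨T⟩⟩ := Q.equivalent_one_zero_neg_one_weighted_sum_squared
  have hw_eq_one (i) : w i = 1 := by
    have hpos : 0 < w i := by
      have h := hQ (T.symm (Pi.single i 1)) (by simp)
      rw [T.symm.map_app] at h
      simpa [QuadraticMap.weightedSumSquares_apply, Pi.single_apply] using h
    rcases hw i with h | h | h <;> linarith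
  refine ⟨T.toLinearEquiv.trans (WithLp.linearEquiv 2 ℝ _).symm, fun z => ?_⟩
  rw [← T.map_app z, QuadraticMap.weightedSumSquares_apply, EuclideanSpace.real_norm_sq_eq]
  simp [hw_eq_one, sq]

theorem exists_isMinOn_quadraticForm_ne_of_not_convex [TopologicalSpace E]
    [IsTopologicalAddGroup E] [ContinuousSMul ℝ E] (hQ : Q.PosDef) {C : Set E} (hC : IsClosed C)
    (hconv : ¬ Convex ℝ C) :
    ∃ x, ∃ p ∈ C, ∃ q ∈ C, p ≠ q ∧
      IsMinOn (fun z => Q (z - x)) C p ∧ IsMinOn (fun z => Q (z - x)) C q := by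
  obtain ⟨T, hT⟩ := exists_linearEquiv_euclideanSpace_norm_sq_eq hQ
  have hclosed : IsClosed (T.symm ⁻¹' C) :=
    hC.preimage T.symm.toLinearMap.continuous_of_finiteDimensional
  have hnotconv : ¬ Convex ℝ (T.symm ⁻¹' C) := fun h => hconv <| by
    simpa [preimage_preimage] using h.linear_preimage T.toLinearMap
  have hmin {x p} (hp : IsNearestPoint (T.symm ⁻¹' C) x p) :
      IsMinOn (fun z => Q (z - T.symm x)) C (T.symm p) := fun c hc => by
    have hdist : dist x p ≤ dist x (T c) := hp.2 (by simpa using hc)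
    rw [dist_comm, dist_eq_norm, dist_comm, dist_eq_norm] at hdist
    simpa [← hT] using pow_le_pow_left₀ (norm_nonneg _) hdist 2
  obtain ⟨x, p, q, hpq, hp, hq⟩ := exists_isNearestPoint_ne_of_not_convex hclosed hnotconv
  exact ⟨T.symm x, T.symm p, hp.1, T.symm q, hq.1, T.symm.injective.ne hpq, hmin hp, hmin hq⟩

end QuadraticForm

section ConvexGraph

variable {𝕜 E F : Type*} [Field 𝕜] [LinearOrder 𝕜] [IsStrictOrderedRing 𝕜]
  [AddCommGroup E] [Module 𝕜 E] [AddCommGroup F] [Module 𝕜 F] {S : E → F}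

theorem map_add_eq_of_convex_graph (hS : Convex 𝕜 {z : F × E | z.1 = S z.2}) (a b : E) :
    S (a + b) + S 0 = S a + S b := by
  have hmid (x y : E) : S ((2⁻¹ : 𝕜) • (x + y)) = (2⁻¹ : 𝕜) • (S x + S y) := by
    rw [smul_add, smul_add]
    exact (hS (x := (S x, x)) rfl (y := (S y, y)) rfl (by positivity) (by positivity)
      (by norm_num : (2⁻¹ : 𝕜) + 2⁻¹ = 1)).symm
  have h := (hmid (a + b) 0).symm.trans (add_zero (a + b) ▸ hmid a b)
  exact (smul_right_injective F (by norm_num : (2⁻¹ : 𝕜) ≠ 0)) h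

theorem map_smul_sub_eq_of_convex_graph (hS : Convex 𝕜 {z : F × E | z.1 = S z.2}) {t : 𝕜}
    (ht : 0 ≤ t) (u : E) : S (t • u) - S 0 = t • (S u - S 0) := by
  have hunit {r : 𝕜} (hr₀ : 0 ≤ r) (hr₁ : r ≤ 1) (v : E) : S (r • v) - S 0 = r • (S v - S 0) := by
    have h : r • S v + (1 - r) • S 0 = S (r • v + (1 - r) • (0 : E)) :=
      hS (x := (S v, v)) rfl (y := (S 0, 0)) rfl hr₀ (sub_nonneg.2 hr₁) (add_sub_cancel r 1)
    rw [smul_zero, add_zero] at h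
    rw [← h]
    module
  rcases le_total t 1 with ht₁ | ht₁
  · exact hunit ht ht₁ u
  · have htpos : 0 < t := one_pos.trans_le ht₁
    have h := hunit (inv_nonneg.2 ht) (inv_le_one_of_one_le₀ ht₁) (t • u)
    rw [inv_smul_smul₀ htpos.ne'] at h
    rw [h, smul_inv_smul₀ htpos.ne']

theorem exists_linearMap_of_convex_graph (hS : Convex 𝕜 {z : F × E | z.1 = S z.2}) :
    ∃ L : E →ₗ[𝕜] F, ∀ u, S u = L u + S 0 := by
  let G : E →+ F := .mk' (fun u => S u - S 0) fun a b => by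
    rw [eq_sub_of_add_eq (map_add_eq_of_convex_graph hS a b)]
    abel
  refine ⟨{ G with map_smul' := fun t u => ?_ }, fun u => (sub_add_cancel (S u) (S 0)).symm⟩
  change G (t • u) = t • G u
  rcases le_total 0 t with ht | ht
  · exact map_smul_sub_eq_of_convex_graph hS ht u
  · have h : G (-t • u) = -t • G u := map_smul_sub_eq_of_convex_graph hS (neg_nonneg.2 ht) u
    rwa [neg_smul, neg_smul, map_neg, neg_inj] at h

end ConvexGraph

theorem finite_dimensional_tracking_nonuniqueness_general {Y U : Type*}
    [AddCommGroup Y] [Module ℝ Y] [FiniteDimensional ℝ Y]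
    [TopologicalSpace Y] [IsTopologicalAddGroup Y] [ContinuousSMul ℝ Y]
    [AddCommGroup U] [Module ℝ U] [FiniteDimensional ℝ U]
    [TopologicalSpace U] [IsTopologicalAddGroup U] [ContinuousSMul ℝ U]
    {QY : QuadraticForm ℝ Y} {QU : QuadraticForm ℝ U} (hQY : QY.PosDef) (hQU : QU.PosDef)
    {S : U → Y} (hgraph : IsClosed {z : Y × U | z.1 = S z.2})
    (hSna : ¬ ∃ L : U →ₗ[ℝ] Y, ∀ u, S u = L u + S 0) :
    ∃ (yd : Y) (ud : U) (s₁ s₂ : Y × U), s₁ ≠ s₂ ∧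
      (s₁.1 = S s₁.2 ∧ ∀ u, QY (s₁.1 - yd) + QU (s₁.2 - ud) ≤ QY (S u - yd) + QU (u - ud)) ∧
      (s₂.1 = S s₂.2 ∧ ∀ u, QY (s₂.1 - yd) + QU (s₂.2 - ud) ≤ QY (S u - yd) + QU (u - ud)) := by
  obtain ⟨⟨yd, ud⟩, s₁, hs₁, s₂, hs₂, hne, hmin₁, hmin₂⟩ :=
    exists_isMinOn_quadraticForm_ne_of_not_convex (hQY.prod hQU) hgraph
      (mt exists_linearMap_of_convex_graph hSna)
  exact ⟨yd, ud, s₁, s₂, hne, ⟨hs₁, fun u => hmin₁ (rfl : (S u, u).1 = S u)⟩,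
    ⟨hs₂, fun u => hmin₂ (rfl : (S u, u).1 = S u)⟩⟩

/-- **Nonuniqueness for finite-dimensional tracking-type problems.** Let `ν > 0`, let
`A ∈ ℝ^{l×l}` and `B ∈ ℝ^{m×m}` be symmetric positive definite, and let
`S : ℝ^m → ℝ^l` be continuous and not affine-linear. Then there exist `y_d ∈ ℝ^l` and
`u_d ∈ ℝ^m` such that the problem of minimizing
`(1/2)(y - y_d)ᵀ A (y - y_d) + (ν/2)(u - u_d)ᵀ B (u - u_d)` subject to `y = S(u)`
has more than one global solution. -/
theorem finite_dimensional_tracking_nonuniqueness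
    (l m : ℕ) (hl : 0 < l) (hm : 0 < m) (ν : ℝ) (hν : 0 < ν)
    (A : Matrix (Fin l) (Fin l) ℝ) (B : Matrix (Fin m) (Fin m) ℝ)
    (hA : A.PosDef) (hB : B.PosDef)
    (S : (Fin m → ℝ) → (Fin l → ℝ)) (hScont : Continuous S)
    (hSna : ¬ ∃ L : (Fin m → ℝ) →ₗ[ℝ] (Fin l → ℝ), ∀ u, S u = L u + S 0) :
    ∃ (yd : Fin l → ℝ) (ud : Fin m → ℝ)
      (s₁ s₂ : (Fin l → ℝ) × (Fin m → ℝ)), s₁ ≠ s₂ ∧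
      (s₁.1 = S s₁.2 ∧ ∀ u : Fin m → ℝ,
        (1 / 2) * ((s₁.1 - yd) ⬝ᵥ A.mulVec (s₁.1 - yd)) +
            (ν / 2) * ((s₁.2 - ud) ⬝ᵥ B.mulVec (s₁.2 - ud)) ≤
          (1 / 2) * ((S u - yd) ⬝ᵥ A.mulVec (S u - yd)) +
            (ν / 2) * ((u - ud) ⬝ᵥ B.mulVec (u - ud))) ∧
      (s₂.1 = S s₂.2 ∧ ∀ u : Fin m → ℝ,
        (1 / 2) * ((s₂.1 - yd) ⬝ᵥ A.mulVec (s₂.1 - yd)) +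
            (ν / 2) * ((s₂.2 - ud) ⬝ᵥ B.mulVec (s₂.2 - ud)) ≤
          (1 / 2) * ((S u - yd) ⬝ᵥ A.mulVec (S u - yd)) +
            (ν / 2) * ((u - ud) ⬝ᵥ B.mulVec (u - ud))) := by
  simpa [Matrix.toQuadraticForm', toLinearMap₂'_apply'] using
    finite_dimensional_tracking_nonuniqueness_general
      (hA.toQuadraticForm'.smul one_half_pos) (hB.toQuadraticForm'.smul (half_pos hν))
      (isClosed_eq continuous_fst (hScont.comp continuous_snd)) hSna
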